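/- arXiv:1804.10802 — 2 statements merged into one kernel-verified Lean document; each statement's English description precedes it below -/
import Mathlib

section
/- Let α be a type and let A and B be palindromic lists over α, each of even length. Then for every n ≥ 0 the list S_{A,B}(n) is evenly palindromic: there exists an integer k such that the k-th circular shift C_k(S_{A,B}(n)) is palindromic. -/
/-- Stern's diatomic sequence. -/
def stern : ℕ → ℕ
  | 0 => 0
  | 1 => 1
  | n + 2 =>
    if (n + 2) % 2 = 0 then stern ((n + 2) / 2)
    else stern ((n + 2) / 2) + stern ((n + 2) / 2 + 1)
decreasing_by all_goals omega

/-- OEIS A003602: a(1)=1, a(2n)=a(n), a(2n+1)=n+1. (a(0)=0 as junk value.) -/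
def aseq : ℕ → ℕ
  | 0 => 0
  | 1 => 1
  | n + 2 =>
    if (n + 2) % 2 = 0 then aseq ((n + 2) / 2)
    else (n + 2) / 2 + 1
decreasing_by all_goals omega

-- the modified sequence `a*`: zero at powers of two.
open Classical in
noncomputable def aStar (j : ℕ) : ℕ :=
  if ∃ k, j = 2 ^ k then 0 else aseq j

theorem aseq_le (n : ℕ) : aseq n ≤ n := by
  induction n using Nat.strong_induction_on with
  | _ n ih =>
    match n with
    | 0 => simp [aseq]
    | 1 => simp [aseq]
    | m + 2 =>
      rw [aseq]
      split
      · exact le_trans (ih ((m + 2) / 2) (by omega)) (by omega)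
      · omega

theorem aStar_le (j : ℕ) : aStar j ≤ j := by
  unfold aStar
  split
  · omega
  · exact aseq_le j

/-- The Markov-type sequence `S_{A,B}(n)`. -/
noncomputable def mseq {α : Type*} (A B : List α) : ℕ → List α
  | 0 => A
  | 1 => B
  | 2 => A ++ B
  | n + 3 =>
    if (n + 3) % 2 = 0 then
      mseq A B ((n + 3) / 2) ++ mseq A B (aseq ((n + 3) / 2))
    else
      mseq A B (aStar ((n + 4) / 2 - 1)) ++ mseq A B ((n + 4) / 2)
decreasing_by
  all_goals first
    | omega
    | exact lt_of_le_of_lt (aseq_le _) (by omega)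
    | exact lt_of_le_of_lt (aStar_le _) (by omega)

theorem conj_rot {α : Type*} (m : ℕ) : ∀ (x y c : List α), c.length ≤ m →
    x ++ c = c ++ y → x ~r y := by
  induction m with
  | zero =>
    intro x y c hc h
    have : c = [] := List.length_eq_zero_iff.mp (by omega)
    subst this
    simp at h
    rw [h]
  | succ m ih =>
    intro x y c hc h
    have hl := congrArg List.length h
    simp only [List.length_append] at hl
    rcases List.append_eq_append_iff.mp h with ⟨t, h1, h2⟩ | ⟨t, h1, h2⟩
    · rcases x.eq_nil_or_concat with hx | ⟨x', b, hx⟩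
      · subst hx
        have : y = [] := List.length_eq_zero_iff.mp (by rw [List.length_nil] at hl; omega)
        rw [this]
      · apply ih x y t
        · have := congrArg List.length h1
          rw [hx] at this
          simp at this
          omega
        · rw [← h2, h1]
    · rw [h1, h2]
      exact List.isRotated_append

def mstep {α : Type*} (q : List α × List α) (b : Bool) : List α × List α :=
  if b then (q.1 ++ q.2, q.2) else (q.1, q.1 ++ q.2)

def mrun {α : Type*} (q : List α × List α) (p : List Bool) : List α :=
  (p.foldl mstep q).1 ++ (p.foldl mstep q).2

theorem mrun_conj {α : Type*} (w : List α) (p : List Bool) : ∀ (u v u' v' : List α),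
    u ++ w = w ++ u' → v ++ w = w ++ v' →
    mrun (u, v) p ++ w = w ++ mrun (u', v') p := by
  induction p with
  | nil =>
    intro u v u' v' h1 h2
    simp only [mrun, List.foldl_nil]
    rw [List.append_assoc, h2, ← List.append_assoc, h1, List.append_assoc]
  | cons b p ih =>
    intro u v u' v' h1 h2
    have h3 : (u ++ v) ++ w = w ++ (u' ++ v') := by
      rw [List.append_assoc, h2, ← List.append_assoc, h1, List.append_assoc]
    cases b
    · exact ih _ _ _ _ h1 h3
    · exact ih _ _ _ _ h3 h2

theorem half_pal {α : Type*} (U : List α) (h : U.reverse = U) (he : Even U.length) :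
    ∃ c, U = c ++ c.reverse := by
  obtain ⟨m, hm⟩ := he
  refine ⟨U.take m, ?_⟩
  conv_lhs => rw [← List.take_append_drop m U]
  congr 1
  rw [List.reverse_take, h]
  congr 1
  omega

theorem mrun_pal {α : Type*} (p : List Bool) : ∀ (U V : List α),
    U.reverse = U → V.reverse = V → Even U.length → Even V.length →
    ∃ w, mrun (U, V) p ~r w ∧ w.reverse = w := by
  induction p with
  | nil =>
    intro U V hU hV hUe hVe
    obtain ⟨c, rfl⟩ := half_pal U hU hUe
    refine ⟨c.reverse ++ V ++ c, ?_, by simp [hV]⟩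
    have : c ++ (c.reverse ++ V) ~r (c.reverse ++ V) ++ c := List.isRotated_append
    simpa [mrun] using this
  | cons b p ih =>
    intro U V hU hV hUe hVe
    cases b
    · obtain ⟨c, rfl⟩ := half_pal U hU hUe
      obtain ⟨w, hw, hp⟩ := ih (c.reverse ++ c) (c.reverse ++ V ++ c) (by simp) (by simp [hV])
        (by simp) (by simp only [List.length_append, List.length_reverse]; grind)
      refine ⟨w, List.IsRotated.trans ?_ hw, hp⟩
      apply conj_rot c.length _ _ c le_rfl
      exact mrun_conj c p _ _ _ _ (by simp) (by simp)
    · obtain ⟨d, rfl⟩ := half_pal V hV hVe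
      obtain ⟨w, hw, hp⟩ := ih (d.reverse ++ U ++ d) (d.reverse ++ d) (by simp [hU]) (by simp)
        (by simp only [List.length_append, List.length_reverse]; grind) (by simp)
      refine ⟨w, List.IsRotated.trans (List.IsRotated.symm ?_) hw, hp⟩
      apply conj_rot d.reverse.length _ _ d.reverse le_rfl
      exact mrun_conj d.reverse p _ _ _ _ (by simp) (by simp)

theorem aseq_even (j : ℕ) (hj : 1 ≤ j) : aseq (2 * j) = aseq j := by
  obtain ⟨m, rfl⟩ : ∃ m, j = m + 1 := ⟨j - 1, by omega⟩
  rw [show 2 * (m + 1) = 2 * m + 2 by ring, aseq, if_pos (by omega)]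
  congr 1
  omega

theorem aseq_odd (j : ℕ) (hj : 1 ≤ j) : aseq (2 * j + 1) = j + 1 := by
  obtain ⟨m, rfl⟩ : ∃ m, j = m + 1 := ⟨j - 1, by omega⟩
  rw [show 2 * (m + 1) + 1 = (2 * m + 1) + 2 by ring, aseq, if_neg (by omega)]
  omega

theorem aStar_even (j : ℕ) (hj : 1 ≤ j) : aStar (2 * j) = aStar j := by
  have : (∃ k, 2 * j = 2 ^ k) ↔ ∃ k, j = 2 ^ k := by
    constructor
    · rintro ⟨k, hk⟩
      cases k with
      | zero => simp at hk
      | succ k => exact ⟨k, by rw [pow_succ] at hk; omega⟩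
    · rintro ⟨k, hk⟩
      exact ⟨k + 1, by rw [pow_succ]; omega⟩
  unfold aStar
  by_cases h : ∃ k, j = 2 ^ k
  · rw [if_pos h, if_pos (this.mpr h)]
  · rw [if_neg h, if_neg (fun h' => h (this.mp h')), aseq_even j hj]

theorem aStar_odd (j : ℕ) (hj : 1 ≤ j) : aStar (2 * j + 1) = j + 1 := by
  have : ¬ (∃ k, 2 * j + 1 = 2 ^ k) := by
    rintro ⟨k, hk⟩
    cases k with
    | zero => simp at hk; omega
    | succ k => rw [pow_succ] at hk; omega
  rw [aStar, if_neg this, aseq_odd j hj]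

theorem mseq_even {α : Type*} (A B : List α) (j : ℕ) (hj : 2 ≤ j) :
    mseq A B (2 * j) = mseq A B j ++ mseq A B (aseq j) := by
  obtain ⟨m, rfl⟩ : ∃ m, j = m + 2 := ⟨j - 2, by omega⟩
  rw [show 2 * (m + 2) = (2 * m + 1) + 3 by ring, mseq, if_pos (by omega),
    show (2 * m + 1 + 3) / 2 = m + 2 by omega]

theorem mseq_odd {α : Type*} (A B : List α) (j : ℕ) (hj : 1 ≤ j) :
    mseq A B (2 * j + 1) = mseq A B (aStar j) ++ mseq A B (j + 1) := by
  obtain ⟨m, rfl⟩ : ∃ m, j = m + 1 := ⟨j - 1, by omega⟩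
  rw [show 2 * (m + 1) + 1 = (2 * m) + 3 by ring, mseq, if_neg (by omega),
    show (2 * m + 4) / 2 = m + 2 by omega]
  rfl

theorem mseq_run {α : Type*} (A B : List α) (j : ℕ) : ∃ p : List Bool,
    p.foldl mstep (A, B) = (mseq A B (aStar (j + 1)), mseq A B (aseq (j + 2))) ∧
    mseq A B (j + 2) = mrun (A, B) p := by
  induction j using Nat.strong_induction_on with
  | _ j ih =>
    rcases Nat.eq_zero_or_pos j with rfl | hj
    · have h1 : aStar 1 = 0 := by
        rw [aStar, if_pos ⟨0, by simp⟩]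
      have h2 : aseq 2 = 1 := by simp [aseq]
      refine ⟨[], ?_, ?_⟩
      · simp [h1, h2, mseq]
      · simp [mrun, mseq]
    · rcases Nat.even_or_odd' j with ⟨i, rfl | rfl⟩
      · obtain ⟨t, rfl⟩ : ∃ t, i = t + 1 := ⟨i - 1, by omega⟩
        obtain ⟨p, hp, hq⟩ := ih t (by omega)
        rw [mrun, hp] at hq
        have e1 : aStar (2 * (t + 1) + 1) = t + 2 := aStar_odd (t + 1) (by omega)
        have e2 : aseq (2 * (t + 1) + 2) = aseq (t + 2) := aseq_even (t + 2) (by omega)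
        have e3 : mseq A B (2 * (t + 1) + 2) = _ := mseq_even A B (t + 2) (by omega)
        refine ⟨p ++ [true], ?_, ?_⟩
        · rw [List.foldl_append, hp, e1, e2, hq]
          rfl
        · rw [mrun, List.foldl_append, hp, e3, hq]
          rfl
      · obtain ⟨p, hp, hq⟩ := ih i (by omega)
        rw [mrun, hp] at hq
        have e1 : aStar (2 * i + 1 + 1) = aStar (i + 1) := aStar_even (i + 1) (by omega)
        have e2 : aseq (2 * i + 1 + 2) = i + 2 := aseq_odd (i + 1) (by omega)
        have e3 : mseq A B (2 * i + 1 + 2) = mseq A B (aStar (i + 1)) ++ mseq A B (i + 2) :=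
          mseq_odd A B (i + 1) (by omega)
        refine ⟨p ++ [false], ?_, ?_⟩
        · rw [List.foldl_append, hp, e1, e2, hq]
          rfl
        · rw [mrun, List.foldl_append, hp, e3, hq]
          rfl

/-- for palindromic `A`, `B` of even length, every `S_{A,B}(n)` is evenly
palindromic: some circular shift of it is palindromic. -/
theorem stmt2 {α : Type*} (A B : List α) (hA : A.reverse = A) (hB : B.reverse = B)
    (hAe : Even A.length) (hBe : Even B.length) (n : ℕ) :
    ∃ k : ℕ, ((mseq A B n).rotate k).reverse = (mseq A B n).rotate k := by
  match n with
  | 0 => exact ⟨0, by simpa [mseq] using hA⟩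
  | 1 => exact ⟨0, by simpa [mseq] using hB⟩
  | j + 2 =>
    obtain ⟨p, -, hp⟩ := mseq_run A B j
    obtain ⟨w, ⟨k, hk⟩, hw⟩ := mrun_pal p A B hA hB hAe hBe
    exact ⟨k, by rw [hp, hk, hw]⟩
end

section
/- Let α be a type and let A, B be lists over α, both of length ℓ. Then for every m ≥ 1, the length of S_{A,B}(m) satisfies |S(m)| = ℓ · d(2m−1), where d is Stern's diatomic sequence. -/
theorem stern_even (n : ℕ) : stern (2 * n) = stern n := by
  match n with
  | 0 => rfl
  | k + 1 =>
    have h : 2 * (k + 1) = 2 * k + 2 := by ring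
    rw [h, stern, if_pos (by omega)]
    congr 1; omega

theorem stern_odd (n : ℕ) (hn : 1 ≤ n) : stern (2 * n + 1) = stern n + stern (n + 1) := by
  obtain ⟨k, rfl⟩ : ∃ k, n = k + 1 := ⟨n - 1, by omega⟩
  have h : 2 * (k + 1) + 1 = (2 * k + 1) + 2 := by ring
  have h2 : (2 * k + 1 + 2) / 2 = k + 1 := by omega
  rw [h, stern, if_neg (by omega), h2]

theorem aseq_spec (n : ℕ) (hn : 1 ≤ n) : 1 ≤ aseq n ∧ stern (2 * aseq n - 1) = stern n := by
  induction n using Nat.strong_induction_on with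
  | _ n ih =>
    match n, hn with
    | 1, _ => simp [aseq]
    | m + 2, _ =>
      rw [aseq]
      split
      · obtain ⟨h1, h2⟩ := ih ((m + 2) / 2) (by omega) (by omega)
        refine ⟨h1, ?_⟩
        rw [h2, ← stern_even]
        congr 1; omega
      · refine ⟨by omega, ?_⟩
        congr 1; omega

theorem stern_two_pow (k : ℕ) : stern (2 ^ k) = 1 := by
  induction k with
  | zero => simp [stern]
  | succ k ih => rw [pow_succ, mul_comm, stern_even, ih]

/-- if `A` and `B` both have length `ℓ`, then for every `m ≥ 1`,
`|S(m)| = ℓ · d(2m−1)`. -/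
theorem stmt7 {α : Type*} (A B : List α) (ℓ : ℕ) (hA : A.length = ℓ) (hB : B.length = ℓ)
    (m : ℕ) (hm : 1 ≤ m) :
    (mseq A B m).length = ℓ * stern (2 * m - 1) := by
  induction m using Nat.strong_induction_on with
  | _ m ih =>
    match m, hm with
    | 1, _ => simp [mseq, stern, hB]
    | 2, _ =>
      have h : stern 3 = 2 := by simp [stern]
      simp [mseq, h, hA, hB]; ring
    | n + 3, _ =>
      rw [mseq]
      split
      · obtain ⟨j, hj⟩ : ∃ j, n + 3 = 2 * j := ⟨(n + 3) / 2, by omega⟩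
        have h2 : (n + 3) / 2 = j := by omega
        obtain ⟨h3, h4⟩ := aseq_spec j (by omega)
        have h5 := aseq_le j
        rw [h2, List.length_append, ih j (by omega) (by omega), ih _ (by omega) h3, h4]
        have h6 : 2 * (n + 3) - 1 = 2 * (2 * j - 1) + 1 := by omega
        have h7 : 2 * j - 1 + 1 = 2 * j := by omega
        rw [h6, stern_odd _ (by omega), h7, stern_even]
        ring
      · obtain ⟨i, hi⟩ : ∃ i, n + 3 = 2 * i + 1 := ⟨(n + 3) / 2, by omega⟩
        have h2 : (n + 4) / 2 = i + 1 := by omega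
        have key : (mseq A B (aStar i)).length = ℓ * stern i := by
          unfold aStar
          split
          · rename_i h
            obtain ⟨k, rfl⟩ := h
            rw [stern_two_pow]
            simp [mseq, hA]
          · obtain ⟨h3, h4⟩ := aseq_spec i (by omega)
            have h5 := aseq_le i
            rw [ih _ (by omega) h3, h4]
        have h6 : 2 * (n + 3) - 1 = 2 * (2 * i) + 1 := by omega
        have h7 : 2 * (i + 1) - 1 = 2 * i + 1 := by omega
        rw [h2, Nat.add_sub_cancel, List.length_append, key, ih (i + 1) (by omega) (by omega),
          h6, h7, stern_odd (2 * i) (by omega), stern_even]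
        ring
end
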